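/- There exists a universal constant C with the following property. Fix λ ≥ 1 and C₀ > 0. Let K : ℝ² × ℝ² → ℝ be a continuously differentiable kernel such that, writing z = (z₁,z₂) ∈ ℝ² × ℝ², one has ∫∫_{ℝ²×ℝ²} |z^a ∂_z^b K(z)| dz ≤ C₀ λ^{|b|−|a|} for all multi-indices a, b with 0 ≤ |a|, |b| ≤ 1. Define the bilinear convolution operator S(f₁,f₂)(x) = ∫∫_{ℝ²×ℝ²} K(x−y₁, x−y₂) f₁(y₁) f₂(y₂) dy₁ dy₂. Let u : ℝ² × ℝ → ℝ² be a smooth vector field, 2π-periodic in space, with div u(·,t) = 0 for all t, let D_t = ∂_t + u·∇, and let f₁, f₂ : ℝ² × ℝ → ℝ be smooth and 2π-periodic in space. Then for every time t: sup_{x∈ℝ²} | D_t S(f₁,f₂)(x,t) − S(D_t f₁, f₂)(x,t) − S(f₁, D_t f₂)(x,t) | ≤ C C₀ ‖∇u(·,t)‖_{C⁰} ‖f₁(·,t)‖_{C⁰} ‖f₂(·,t)‖_{C⁰}; in particular the bound is independent of λ. -/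

import Mathlib

noncomputable section

open Real MeasureTheory
open scoped BigOperators

abbrev E2 : Type := EuclideanSpace ℝ (Fin 2)
abbrev E4 : Type := E2 × E2

/-- The four coordinate directions of `ℝ² × ℝ²`. -/
def dir : Fin 2 ⊕ Fin 2 → E4 :=
  Sum.elim (fun i => (EuclideanSpace.single i 1, 0)) (fun i => (0, EuclideanSpace.single i 1))

/-- The four coordinate functions of `z = (z₁, z₂) ∈ ℝ² × ℝ²`. -/
def coordFn : Fin 2 ⊕ Fin 2 → E4 → ℝ :=
  Sum.elim (fun i z => z.1 i) (fun i z => z.2 i)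

instance instHaarE4 : (volume : Measure E4).IsAddHaarMeasure :=
  inferInstanceAs ((volume : Measure E2).prod (volume : Measure E2)).IsAddHaarMeasure

instance negInvE4 : (volume : Measure E4).IsNegInvariant :=
  Measure.IsAddHaarMeasure.isNegInvariant_of_regular _


lemma per_bdd {F : Type*} [NormedAddCommGroup F] (g : E2 × ℝ → F) (hg : Continuous g)
    (hp : ∀ (x : E2) (t : ℝ) (i : Fin 2),
        g (x + (2 * π) • EuclideanSpace.single i 1, t) = g (x, t)) (t : ℝ) :
    ∃ M : ℝ, 0 ≤ M ∧ ∀ x τ, |τ - t| ≤ 1 → ‖g (x, τ)‖ ≤ M := by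
  have hpz : ∀ (i : Fin 2) (n : ℤ) (x : E2) (τ : ℝ),
      g (x - n • ((2 * π) • EuclideanSpace.single i (1:ℝ)), τ) = g (x, τ) := by
    intro i n x τ
    have : Function.Periodic (fun x => g (x, τ)) ((2 * π) • EuclideanSpace.single i (1:ℝ)) :=
      fun x => hp x τ i
    exact this.sub_zsmul_eq n
  have hK : IsCompact (Metric.closedBall (0 : E2) (2 * π + 2 * π) ×ˢ Metric.closedBall t 1) :=
    (isCompact_closedBall _ _).prod (isCompact_closedBall _ _)
  obtain ⟨M, hM⟩ := hK.exists_bound_of_continuousOn hg.continuousOn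
  refine ⟨max M 0, le_max_right _ _, fun x τ hτ => ?_⟩
  have h2 : (0:ℝ) < 2 * π := by positivity
  set n : Fin 2 → ℤ := fun i => toIcoDiv h2 0 (x i) with hn
  have hx : g (x, τ) = g (x - n 0 • ((2 * π) • EuclideanSpace.single 0 (1:ℝ))
      - n 1 • ((2 * π) • EuclideanSpace.single 1 (1:ℝ)), τ) := by
    rw [hpz, hpz]
  rw [hx]
  refine (hM _ ⟨?_, ?_⟩).trans (le_max_left _ _)
  · simp only [mem_closedBall_zero_iff]
    set w := x - n 0 • ((2 * π) • EuclideanSpace.single 0 (1:ℝ))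
      - n 1 • ((2 * π) • EuclideanSpace.single 1 (1:ℝ)) with hw
    have hwi : ∀ i, w i = toIcoMod h2 0 (x i) := by
      intro i
      rw [toIcoMod]
      fin_cases i <;> simp [hw, hn]
    have hb : ∀ i, ‖w i‖ ≤ 2 * π := by
      intro i
      have := toIcoMod_mem_Ico h2 0 (x i)
      rw [hwi, Real.norm_eq_abs, abs_of_nonneg this.1]
      simpa using this.2.le
    have hsum : w = ∑ i, w i • EuclideanSpace.single i (1:ℝ) := by
      ext j; fin_cases j <;> simp
    rw [hsum]
    refine (norm_sum_le _ _).trans ?_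
    rw [Fin.sum_univ_two, norm_smul, norm_smul]
    simp only [PiLp.norm_single, norm_one, mul_one]
    exact add_le_add (hb 0) (hb 1)
  · simpa [Real.dist_eq] using hτ

lemma norm_le_sum (w : E2) : ‖w‖ ≤ ∑ i, |w i| := by
  have hsum : w = ∑ i, w i • EuclideanSpace.single i (1:ℝ) := by
    ext j; fin_cases j <;> simp
  conv_lhs => rw [hsum]
  refine (norm_sum_le _ _).trans ?_
  simp [norm_smul]

lemma clm_sum (L : E2 →L[ℝ] ℝ) (w : E2) : L w = ∑ i, w i * L (EuclideanSpace.single i (1:ℝ)) := by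
  have hsum : w = ∑ i, w i • EuclideanSpace.single i (1:ℝ) := by
    ext j; fin_cases j <;> simp
  conv_lhs => rw [hsum]
  simp

lemma norm_dir (κ) : ‖dir κ‖ ≤ 1 := by
  rcases κ with i | i <;> simp [dir, Prod.norm_def]

lemma ibp (C₀ : ℝ) (K : E4 → ℝ) (hK : ContDiff ℝ 1 K) (hKi : Integrable K)
    (hdK : ∀ κ, Integrable (fun z => |fderiv ℝ K z (dir κ)|))
    (hzK : ∀ ι κ, Integrable (fun z => |coordFn ι z| * |fderiv ℝ K z (dir κ)|) ∧
        (∫ z, |coordFn ι z| * |fderiv ℝ K z (dir κ)|) ≤ C₀)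
    (G : E4 → ℝ) (hG : ContDiff ℝ 1 G) (M M' : ℝ) (hM0 : 0 ≤ M) (hM : ∀ z, ‖G z‖ ≤ M)
    (hM' : ∀ z κ, ‖fderiv ℝ G z (dir κ)‖ ≤ M')
    (W : Fin 2 ⊕ Fin 2 → E4 → ℝ) (hW : ∀ κ, ContDiff ℝ 1 (W κ))
    (L B B' : ℝ) (hL0 : 0 ≤ L) (hWL : ∀ κ z, |W κ z| ≤ L * ∑ ι, |coordFn ι z|)
    (hWB : ∀ κ z, ‖W κ z‖ ≤ B) (hWB' : ∀ κ z, ‖fderiv ℝ (W κ) z (dir κ)‖ ≤ B')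
    (hdiv : ∀ z, ∑ κ, fderiv ℝ (W κ) z (dir κ) = 0) :
    |∫ z, K z * ∑ κ, W κ z * fderiv ℝ G z (dir κ)| ≤ 16 * C₀ * L * M := by
  have cdK : ∀ v, Continuous (fun z => fderiv ℝ K z v) := fun v =>
    (hK.continuous_fderiv one_ne_zero).clm_apply continuous_const
  have cdG : ∀ v, Continuous (fun z => fderiv ℝ G z v) := fun v =>
    (hG.continuous_fderiv one_ne_zero).clm_apply continuous_const
  have cdW : ∀ κ v, Continuous (fun z => fderiv ℝ (W κ) z v) := fun κ v =>
    ((hW κ).continuous_fderiv one_ne_zero).clm_apply continuous_const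
  have idK : ∀ κ, Integrable (fun z => fderiv ℝ K z (dir κ)) := fun κ =>
    (integrable_norm_iff (cdK _).aestronglyMeasurable).1 (by simpa using hdK κ)
  have hKd : Differentiable ℝ K := hK.differentiable one_ne_zero
  have hGd : Differentiable ℝ G := hG.differentiable one_ne_zero
  have hWd : ∀ κ, Differentiable ℝ (W κ) := fun κ => (hW κ).differentiable one_ne_zero
  have bm : ∀ (f g : E4 → ℝ) (c : ℝ), Integrable f → Continuous g → (∀ z, ‖g z‖ ≤ c) →
      Integrable (fun z => f z * g z) := fun f g c hf hg hc =>
    hf.mul_bdd (c := c) hg.aestronglyMeasurable (Filter.Eventually.of_forall hc)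
  have iKW : ∀ κ, Integrable (fun z => K z * W κ z) := fun κ =>
    bm _ _ B hKi (hW κ).continuous (hWB κ)
  have i1 : ∀ κ, Integrable (fun z => fderiv ℝ K z (dir κ) * W κ z * G z) := fun κ =>
    bm _ _ M (bm _ _ B (idK κ) (hW κ).continuous (hWB κ)) hG.continuous hM
  have i2 : ∀ κ, Integrable (fun z => K z * fderiv ℝ (W κ) z (dir κ) * G z) := fun κ =>
    bm _ _ M (bm _ _ B' hKi (cdW κ _) (hWB' κ)) hG.continuous hM
  have i3 : ∀ κ, Integrable (fun z => K z * W κ z * fderiv ℝ G z (dir κ)) := fun κ =>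
    bm _ _ M' (iKW κ) (cdG _) (fun z => hM' z κ)
  have hfd : ∀ κ z, fderiv ℝ (fun z => K z * W κ z) z (dir κ)
      = fderiv ℝ K z (dir κ) * W κ z + K z * fderiv ℝ (W κ) z (dir κ) := by
    intro κ z
    rw [fderiv_fun_mul (hKd z) (hWd κ z)]
    simp; ring
  have key : ∀ κ, ∫ z, K z * W κ z * fderiv ℝ G z (dir κ)
      = - ((∫ z, fderiv ℝ K z (dir κ) * W κ z * G z)
        + ∫ z, K z * fderiv ℝ (W κ) z (dir κ) * G z) := by
    intro κ
    rw [integral_mul_fderiv_eq_neg_fderiv_mul_of_integrable, ← integral_add (i1 κ) (i2 κ)]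
    · congr 1; congr 1; ext z; rw [hfd]; ring
    · refine ((i1 κ).add (i2 κ)).congr (Filter.Eventually.of_forall fun z => ?_)
      simp only [Pi.add_apply]; rw [hfd]; ring
    · exact i3 κ
    · exact bm _ _ M (iKW κ) hG.continuous hM
    · exact fun z _ => (hKd z).fun_mul (hWd κ z)
    · exact fun z _ => hGd z
  have e1 : ∫ z, K z * ∑ κ, W κ z * fderiv ℝ G z (dir κ)
      = ∑ κ, ∫ z, K z * W κ z * fderiv ℝ G z (dir κ) := by
    rw [← integral_finsetSum _ (fun κ _ => i3 κ)]
    congr 1; ext z; rw [Finset.mul_sum]; simp only [mul_assoc]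
  have e2 : ∑ κ, ∫ z, K z * fderiv ℝ (W κ) z (dir κ) * G z = 0 := by
    rw [← integral_finsetSum _ (fun κ _ => i2 κ)]
    have : ∀ z, ∑ κ, K z * fderiv ℝ (W κ) z (dir κ) * G z = 0 := by
      intro z; rw [← Finset.sum_mul, ← Finset.mul_sum, hdiv]; simp
    simp [this]
  have e3 : ∫ z, K z * ∑ κ, W κ z * fderiv ℝ G z (dir κ)
      = - ∑ κ, ∫ z, fderiv ℝ K z (dir κ) * W κ z * G z := by
    rw [e1]; simp_rw [key]; rw [Finset.sum_neg_distrib, Finset.sum_add_distrib, e2, add_zero]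
  rw [e3, abs_neg]
  have hone : ∀ κ, |∫ z, fderiv ℝ K z (dir κ) * W κ z * G z| ≤ 4 * C₀ * L * M := by
    intro κ
    have hI : Integrable (fun z => (L * M) * ∑ ι, |coordFn ι z| * |fderiv ℝ K z (dir κ)|) :=
      (integrable_finsetSum _ (fun ι _ => (hzK ι κ).1)).const_mul _
    have h1 : ‖∫ z, fderiv ℝ K z (dir κ) * W κ z * G z‖
        ≤ ∫ z, (L * M) * ∑ ι, |coordFn ι z| * |fderiv ℝ K z (dir κ)| := by
      refine norm_integral_le_of_norm_le hI (Filter.Eventually.of_forall fun z => ?_)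
      rw [norm_mul, norm_mul, Real.norm_eq_abs (fderiv _ _ _ _), Real.norm_eq_abs (W _ _),
        ← Finset.sum_mul]
      calc |fderiv ℝ K z (dir κ)| * |W κ z| * ‖G z‖
          ≤ |fderiv ℝ K z (dir κ)| * (L * ∑ ι, |coordFn ι z|) * M := by
            gcongr
            · exact hWL κ z
            · exact hM z
        _ = _ := by ring
    refine h1.trans ?_
    rw [integral_const_mul, integral_finsetSum _ (fun ι _ => (hzK ι κ).1)]
    have : ∑ ι, ∫ z, |coordFn ι z| * |fderiv ℝ K z (dir κ)| ≤ ∑ _ι : Fin 2 ⊕ Fin 2, C₀ :=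
      Finset.sum_le_sum fun ι _ => (hzK ι κ).2
    have h4 : ∑ _ι : Fin 2 ⊕ Fin 2, C₀ = 4 * C₀ := by simp
    rw [h4] at this
    calc _ ≤ L * M * (4 * C₀) := mul_le_mul_of_nonneg_left this (by positivity)
      _ = _ := by ring
  refine (Finset.abs_sum_le_sum_abs _ _).trans ((Finset.sum_le_sum fun κ _ => hone κ).trans ?_)
  simp; linarith

lemma static_bound (C₀ : ℝ) (K : E4 → ℝ) (hK : ContDiff ℝ 1 K) (hKi : Integrable K)
    (hdK : ∀ κ, Integrable (fun z => |fderiv ℝ K z (dir κ)|))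
    (hzK : ∀ ι κ, Integrable (fun z => |coordFn ι z| * |fderiv ℝ K z (dir κ)|) ∧
        (∫ z, |coordFn ι z| * |fderiv ℝ K z (dir κ)|) ≤ C₀)
    (g₁ g₂ : E2 → ℝ) (hg₁ : ContDiff ℝ 1 g₁) (hg₂ : ContDiff ℝ 1 g₂)
    (M₁ M₂ M₁' M₂' : ℝ) (hM₁0 : 0 ≤ M₁) (hM₂0 : 0 ≤ M₂)
    (hM₁ : ∀ w, ‖g₁ w‖ ≤ M₁) (hM₂ : ∀ w, ‖g₂ w‖ ≤ M₂)
    (hM₁' : ∀ w, ‖fderiv ℝ g₁ w‖ ≤ M₁') (hM₂' : ∀ w, ‖fderiv ℝ g₂ w‖ ≤ M₂')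
    (v : E2 → E2) (hv : ContDiff ℝ 1 v) (hv0 : v 0 = 0) (L B : ℝ)
    (hL : ∀ w, ‖fderiv ℝ v w‖ ≤ L) (hB : ∀ w, ‖v w‖ ≤ B)
    (hdiv : ∀ w, ∑ j : Fin 2, fderiv ℝ (fun y => v y j) w (EuclideanSpace.single j 1) = 0) :
    |∫ z : E4, K z * (fderiv ℝ g₁ z.1 (v z.1) * g₂ z.2 + g₁ z.1 * fderiv ℝ g₂ z.2 (v z.2))|
      ≤ 16 * C₀ * L * (M₁ * M₂) := by
  have hL0 : 0 ≤ L := (norm_nonneg _).trans (hL 0)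
  have hM₁'0 : 0 ≤ M₁' := (norm_nonneg _).trans (hM₁' 0)
  have hM₂'0 : 0 ≤ M₂' := (norm_nonneg _).trans (hM₂' 0)
  have hg₁d : Differentiable ℝ g₁ := hg₁.differentiable one_ne_zero
  have hg₂d : Differentiable ℝ g₂ := hg₂.differentiable one_ne_zero
  have hvd : Differentiable ℝ v := hv.differentiable one_ne_zero
  have hvi : ∀ i, ContDiff ℝ 1 (fun w => v w i) := fun i => by fun_prop
  have hvid : ∀ i, Differentiable ℝ (fun w => v w i) := fun i =>
    (hvi i).differentiable one_ne_zero
  have hvlip : ∀ w, ‖v w‖ ≤ L * ‖w‖ := by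
    intro w
    have := convex_univ.norm_image_sub_le_of_norm_fderiv_le (𝕜 := ℝ) (f := v) (C := L)
      (fun x _ => hvd x) (fun x _ => hL x) (Set.mem_univ 0) (Set.mem_univ w)
    simpa [hv0] using this
  have hvib : ∀ i w, |v w i| ≤ L * ∑ j, |w j| := fun i w =>
    (PiLp.norm_apply_le (v w) i).trans ((hvlip w).trans
      (mul_le_mul_of_nonneg_left (norm_le_sum w) hL0))
  have hfdi : ∀ i w e, fderiv ℝ (fun w => v w i) w e = (fderiv ℝ v w e) i := by
    intro i w e
    have h := ((EuclideanSpace.proj (𝕜 := ℝ) i : E2 →L[ℝ] ℝ).hasFDerivAt).comp w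
      (hvd w).hasFDerivAt
    have h2 : HasFDerivAt (fun w => v w i)
      ((EuclideanSpace.proj (𝕜 := ℝ) i : E2 →L[ℝ] ℝ).comp (fderiv ℝ v w)) w := h
    rw [h2.fderiv]; rfl
  have hfib : ∀ i j w, ‖fderiv ℝ (fun w => v w i) w (EuclideanSpace.single j 1)‖ ≤ L := by
    intro i j w
    rw [hfdi]
    refine (PiLp.norm_apply_le _ i).trans ?_
    refine (ContinuousLinearMap.le_opNorm _ _).trans ?_
    simpa using hL w
  have c1 : ∀ (h : E2 → ℝ), Differentiable ℝ h → ∀ z e,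
      fderiv ℝ (fun z : E4 => h z.1) z e = fderiv ℝ h z.1 e.1 := by
    intro h hh z e
    have h2 : HasFDerivAt (fun z : E4 => h z.1)
      ((fderiv ℝ h z.1).comp (ContinuousLinearMap.fst ℝ E2 E2)) z :=
      (hh z.1).hasFDerivAt.comp z hasFDerivAt_fst
    rw [h2.fderiv]; rfl
  have c2 : ∀ (h : E2 → ℝ), Differentiable ℝ h → ∀ z e,
      fderiv ℝ (fun z : E4 => h z.2) z e = fderiv ℝ h z.2 e.2 := by
    intro h hh z e
    have h2 : HasFDerivAt (fun z : E4 => h z.2)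
      ((fderiv ℝ h z.2).comp (ContinuousLinearMap.snd ℝ E2 E2)) z :=
      (hh z.2).hasFDerivAt.comp z hasFDerivAt_snd
    rw [h2.fderiv]; rfl
  have hdG : ∀ z e, fderiv ℝ (fun z : E4 => g₁ z.1 * g₂ z.2) z e
      = fderiv ℝ g₁ z.1 e.1 * g₂ z.2 + g₁ z.1 * fderiv ℝ g₂ z.2 e.2 := by
    intro z e
    rw [fderiv_fun_mul (by fun_prop) (by fun_prop)]
    simp only [add_apply, smul_apply, smul_eq_mul,
      c1 g₁ hg₁d, c2 g₂ hg₂d]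
    ring
  let W : Fin 2 ⊕ Fin 2 → E4 → ℝ :=
    Sum.elim (fun i z => v z.1 i) (fun i z => v z.2 i)
  have main := ibp C₀ K hK hKi hdK hzK (fun z => g₁ z.1 * g₂ z.2)
    (by fun_prop) (M₁ * M₂) (M₁' * M₂ + M₁ * M₂') (by positivity)
    (fun z => by
      rw [norm_mul]
      exact mul_le_mul (hM₁ _) (hM₂ _) (norm_nonneg _) hM₁0)
    (fun z κ => by
      rw [hdG]
      refine (norm_add_le _ _).trans ?_
      rw [norm_mul, norm_mul]
      have hd := norm_dir κ
      have hd1 : ‖(dir κ).1‖ ≤ 1 := (norm_fst_le _).trans hd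
      have hd2 : ‖(dir κ).2‖ ≤ 1 := (norm_snd_le _).trans hd
      have a1 : ‖fderiv ℝ g₁ z.1 (dir κ).1‖ ≤ M₁' := by
        simpa using ContinuousLinearMap.le_of_opNorm_le_of_le _ (hM₁' z.1) hd1
      have a2 : ‖fderiv ℝ g₂ z.2 (dir κ).2‖ ≤ M₂' := by
        simpa using ContinuousLinearMap.le_of_opNorm_le_of_le _ (hM₂' z.2) hd2
      gcongr
      · exact hM₂ _
      · exact hM₁ _)
    W (by rintro (i | i) <;> simp only [W, Sum.elim_inl, Sum.elim_inr] <;> fun_prop)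
    L B L hL0
    (by
      rintro (i | i) z <;>
        simp only [W, Sum.elim_inl, Sum.elim_inr, coordFn, Fintype.sum_sum_type]
      · refine (hvib i _).trans (mul_le_mul_of_nonneg_left ?_ hL0)
        exact le_add_of_nonneg_right (Finset.sum_nonneg fun _ _ => abs_nonneg _)
      · refine (hvib i _).trans (mul_le_mul_of_nonneg_left ?_ hL0)
        exact le_add_of_nonneg_left (Finset.sum_nonneg fun _ _ => abs_nonneg _))
    (by
      rintro (i | i) z <;> simp only [W, Sum.elim_inl, Sum.elim_inr]
      · exact (PiLp.norm_apply_le _ i).trans (hB _)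
      · exact (PiLp.norm_apply_le _ i).trans (hB _))
    (by
      rintro (i | i) z <;> simp only [W, Sum.elim_inl, Sum.elim_inr, dir]
      · rw [c1 _ (hvid i)]; exact hfib i i _
      · rw [c2 _ (hvid i)]; exact hfib i i _)
    (by
      intro z
      simp only [W, Sum.elim_inl, Sum.elim_inr, dir, Fintype.sum_sum_type]
      simp only [c1 _ (hvid _), c2 _ (hvid _)]
      rw [hdiv, hdiv, add_zero])
  convert main using 4 with z
  simp only [W, Sum.elim_inl, Sum.elim_inr, dir, Fintype.sum_sum_type, hdG]
  rw [clm_sum (fderiv ℝ g₁ z.1) (v z.1), clm_sum (fderiv ℝ g₂ z.2) (v z.2)]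
  simp [Fin.sum_univ_two]
  left; ring

lemma fderiv_per {F : Type*} [NormedAddCommGroup F] [NormedSpace ℝ F] (g : E2 × ℝ → F)
    (hp : ∀ (x : E2) (t : ℝ) (i : Fin 2),
        g (x + (2 * π) • EuclideanSpace.single i 1, t) = g (x, t)) (x : E2) (t : ℝ) (i : Fin 2) :
    fderiv ℝ g (x + (2 * π) • EuclideanSpace.single i 1, t) = fderiv ℝ g (x, t) := by
  have h := fderiv_comp_add_right (𝕜 := ℝ) (f := g) (x := (x, t))
    (((2 * π) • EuclideanSpace.single i 1, 0) : E2 × ℝ)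
  have : (fun p => g (p + (((2 * π) • EuclideanSpace.single i 1, 0) : E2 × ℝ))) = g := by
    ext p
    obtain ⟨y, s⟩ := p
    simpa using hp y s i
  rw [this] at h
  simpa using h.symm

lemma shift_deriv (f : E2 × ℝ → ℝ) (a : E2) (p : E2 × ℝ) (hf : ContDiff ℝ 1 f) :
    HasFDerivAt (fun p : E2 × ℝ => f (p.1 - a, p.2)) (fderiv ℝ f (p.1 - a, p.2)) p := by
  have h := (hf.differentiable one_ne_zero) (p - (a, 0))
  have e : ∀ q : E2 × ℝ, q - (a, 0) = (q.1 - a, q.2) := fun q => by ext <;> simp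
  have := h.hasFDerivAt.comp p ((hasFDerivAt_id p).sub_const (a, (0:ℝ)))
  rw [ContinuousLinearMap.comp_id, e] at this
  have e2 : (fun p : E2 × ℝ => f (p.1 - a, p.2)) = f ∘ fun q => id q - (a, (0:ℝ)) := by
    funext q; simp only [Function.comp, id, e]
  rw [e2]; exact this

set_option maxHeartbeats 2000000 in
/-- derivative of the bilinear operator jointly in space and time -/
lemma deriv_S (K : E4 → ℝ) (hK : Continuous K) (hKi : Integrable K)
    (f₁ f₂ : E2 × ℝ → ℝ) (h₁ : ContDiff ℝ 1 f₁) (h₂ : ContDiff ℝ 1 f₂) (x : E2) (t : ℝ)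
    (M₁ M₂ M₁' M₂' : ℝ)
    (hM₁0 : 0 ≤ M₁) (hM₂0 : 0 ≤ M₂)
    (hM₁ : ∀ w τ, |τ - t| ≤ 1 → ‖f₁ (w, τ)‖ ≤ M₁) (hM₂ : ∀ w τ, |τ - t| ≤ 1 → ‖f₂ (w, τ)‖ ≤ M₂)
    (hM₁' : ∀ w τ, |τ - t| ≤ 1 → ‖fderiv ℝ f₁ (w, τ)‖ ≤ M₁')
    (hM₂' : ∀ w τ, |τ - t| ≤ 1 → ‖fderiv ℝ f₂ (w, τ)‖ ≤ M₂') :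
    Integrable (fun z : E4 => K z • (f₁ (x - z.1, t) • fderiv ℝ f₂ (x - z.2, t)
        + f₂ (x - z.2, t) • fderiv ℝ f₁ (x - z.1, t))) ∧
    HasFDerivAt (fun p : E2 × ℝ => ∫ z : E4, K z * (f₁ (p.1 - z.1, p.2) * f₂ (p.1 - z.2, p.2)))
      (∫ z : E4, K z • (f₁ (x - z.1, t) • fderiv ℝ f₂ (x - z.2, t)
        + f₂ (x - z.2, t) • fderiv ℝ f₁ (x - z.1, t))) (x, t) := by
  have c₁ := h₁.continuous
  have c₂ := h₂.continuous
  have d₁ := h₁.continuous_fderiv one_ne_zero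
  have d₂ := h₂.continuous_fderiv one_ne_zero
  have hbd : ∀ (p : E2 × ℝ) (z : E4), |p.2 - t| ≤ 1 →
      ‖K z • (f₁ (p.1 - z.1, p.2) • fderiv ℝ f₂ (p.1 - z.2, p.2)
        + f₂ (p.1 - z.2, p.2) • fderiv ℝ f₁ (p.1 - z.1, p.2))‖
      ≤ ‖K z‖ * (M₁ * M₂' + M₂ * M₁') := by
    intro p z hp
    rw [norm_smul]
    refine mul_le_mul_of_nonneg_left ?_ (norm_nonneg _)
    refine (norm_add_le _ _).trans ?_
    rw [norm_smul, norm_smul]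
    exact add_le_add
      (mul_le_mul (hM₁ _ _ hp) (hM₂' _ _ hp) (norm_nonneg _) hM₁0)
      (mul_le_mul (hM₂ _ _ hp) (hM₁' _ _ hp) (norm_nonneg _) hM₂0)
  have hcF' : Continuous (fun z : E4 => K z • (f₁ (x - z.1, t) • fderiv ℝ f₂ (x - z.2, t)
        + f₂ (x - z.2, t) • fderiv ℝ f₁ (x - z.1, t))) := by fun_prop
  have hbi : Integrable (fun z : E4 => ‖K z‖ * (M₁ * M₂' + M₂ * M₁')) := hKi.norm.mul_const _
  have hcF : ∀ p : E2 × ℝ,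
      Continuous (fun z : E4 => K z * (f₁ (p.1 - z.1, p.2) * f₂ (p.1 - z.2, p.2))) := by
    intro p; fun_prop
  refine ⟨hbi.mono' hcF'.aestronglyMeasurable
    (Filter.Eventually.of_forall fun z => hbd (x, t) z (by simp)), ?_⟩
  refine hasFDerivAt_integral_of_dominated_of_fderiv_le (𝕜 := ℝ)
    (F' := fun (p : E2 × ℝ) (z : E4) => K z • (f₁ (p.1 - z.1, p.2) • fderiv ℝ f₂ (p.1 - z.2, p.2)
        + f₂ (p.1 - z.2, p.2) • fderiv ℝ f₁ (p.1 - z.1, p.2)))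
    (bound := fun z : E4 => ‖K z‖ * (M₁ * M₂' + M₂ * M₁'))
    (Metric.ball_mem_nhds (x, t) one_pos)
    (Filter.Eventually.of_forall fun p => (hcF p).aestronglyMeasurable) ?_
    hcF'.aestronglyMeasurable ?_ hbi ?_
  · refine (hKi.norm.mul_const (M₁ * M₂)).mono' (hcF (x, t)).aestronglyMeasurable
      (Filter.Eventually.of_forall fun z => ?_)
    rw [norm_mul, norm_mul]
    refine mul_le_mul_of_nonneg_left ?_ (norm_nonneg _)
    exact mul_le_mul (hM₁ _ _ (by simp)) (hM₂ _ _ (by simp)) (norm_nonneg _) hM₁0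
  · refine Filter.Eventually.of_forall fun z p hp => hbd p z ?_
    rw [Metric.mem_ball, Prod.dist_eq, max_lt_iff, Real.dist_eq] at hp
    exact hp.2.le
  · refine Filter.Eventually.of_forall fun z p _ => ?_
    exact ((shift_deriv f₁ z.1 p h₁).mul (shift_deriv f₂ z.2 p h₂)).const_mul (K z)

set_option maxHeartbeats 4000000 in
/-- Commutator estimate between the material derivative `D_t = ∂ₜ + u·∇` and a bilinear
convolution operator `S(f₁,f₂)(x) = ∫∫ K(x−y₁,x−y₂) f₁(y₁) f₂(y₂) dy₁ dy₂` whose kernel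
obeys `∫∫ |z^a ∂_z^b K| ≤ C₀ λ^{|b|−|a|}` for all multi-indices `0 ≤ |a|,|b| ≤ 1`:
`‖D_t S(f₁,f₂) − S(D_t f₁, f₂) − S(f₁, D_t f₂)‖_{C⁰}
  ≤ C C₀ ‖∇u(·,t)‖_{C⁰} ‖f₁(·,t)‖_{C⁰} ‖f₂(·,t)‖_{C⁰}`,
with `C` universal; in particular the bound is independent of `λ`. -/
theorem material_derivative_bilinear_commutator :
    ∃ C : ℝ, ∀ (lam C₀ : ℝ), 1 ≤ lam → 0 < C₀ →
      ∀ (K : E4 → ℝ) (u : E2 × ℝ → E2) (f₁ f₂ : E2 × ℝ → ℝ),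
      ContDiff ℝ 1 K →
      Integrable K →
      (∫ z, |K z|) ≤ C₀ →
      (∀ ι, Integrable (fun z => |coordFn ι z| * |K z|) ∧
        (∫ z, |coordFn ι z| * |K z|) ≤ C₀ * lam⁻¹) →
      (∀ κ, Integrable (fun z => |fderiv ℝ K z (dir κ)|) ∧
        (∫ z, |fderiv ℝ K z (dir κ)|) ≤ C₀ * lam) →
      (∀ ι κ, Integrable (fun z => |coordFn ι z| * |fderiv ℝ K z (dir κ)|) ∧
        (∫ z, |coordFn ι z| * |fderiv ℝ K z (dir κ)|) ≤ C₀) →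
      ContDiff ℝ (⊤ : ℕ∞) u →
      (∀ (x : E2) (t : ℝ) (i : Fin 2),
        u (x + (2 * π) • EuclideanSpace.single i 1, t) = u (x, t)) →
      (∀ (x : E2) (t : ℝ),
        ∑ j : Fin 2, fderiv ℝ (fun y => u (y, t) j) x (EuclideanSpace.single j 1) = 0) →
      ContDiff ℝ (⊤ : ℕ∞) f₁ →
      (∀ (x : E2) (t : ℝ) (i : Fin 2),
        f₁ (x + (2 * π) • EuclideanSpace.single i 1, t) = f₁ (x, t)) →
      ContDiff ℝ (⊤ : ℕ∞) f₂ →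
      (∀ (x : E2) (t : ℝ) (i : Fin 2),
        f₂ (x + (2 * π) • EuclideanSpace.single i 1, t) = f₂ (x, t)) →
      ∀ (t : ℝ) (x : E2),
        |(deriv (fun τ => ∫ y : E4, K (x - y.1, x - y.2) * f₁ (y.1, τ) * f₂ (y.2, τ)) t
            + fderiv ℝ (fun z => ∫ y : E4, K (z - y.1, z - y.2) * f₁ (y.1, t) * f₂ (y.2, t))
                x (u (x, t)))
          - (∫ y : E4, K (x - y.1, x - y.2) *
                (deriv (fun τ => f₁ (y.1, τ)) t
                  + fderiv ℝ (fun w => f₁ (w, t)) y.1 (u (y.1, t))) * f₂ (y.2, t))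
          - (∫ y : E4, K (x - y.1, x - y.2) * f₁ (y.1, t) *
                (deriv (fun τ => f₂ (y.2, τ)) t
                  + fderiv ℝ (fun w => f₂ (w, t)) y.2 (u (y.2, t))))|
          ≤ C * C₀ * (⨆ z : E2, ‖fderiv ℝ (fun w => u (w, t)) z‖)
              * (⨆ z : E2, |f₁ (z, t)|) * (⨆ z : E2, |f₂ (z, t)|) := by
  refine ⟨16, ?_⟩
  intro lam C₀ _ _ K u f₁ f₂ hK hKi _ _ hdK hzK hu hup hudiv h₁ h₁p h₂ h₂p t x
  have h₁' : ContDiff ℝ 1 f₁ := h₁.of_le (by exact_mod_cast le_top)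
  have h₂' : ContDiff ℝ 1 f₂ := h₂.of_le (by exact_mod_cast le_top)
  have hu' : ContDiff ℝ 1 u := hu.of_le (by exact_mod_cast le_top)
  have df₁ := h₁'.differentiable one_ne_zero
  have df₂ := h₂'.differentiable one_ne_zero
  have du := hu'.differentiable one_ne_zero
  have cK := hK.continuous
  have c₁ := h₁'.continuous
  have c₂ := h₂'.continuous
  have cu := hu'.continuous
  have d₁ := h₁'.continuous_fderiv one_ne_zero
  have d₂ := h₂'.continuous_fderiv one_ne_zero
  obtain ⟨M₁, hM₁0, hM₁⟩ := per_bdd f₁ c₁ h₁p t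
  obtain ⟨M₂, hM₂0, hM₂⟩ := per_bdd f₂ c₂ h₂p t
  obtain ⟨M₁', hM₁'0, hM₁'⟩ := per_bdd _ d₁ (fderiv_per f₁ h₁p) t
  obtain ⟨M₂', hM₂'0, hM₂'⟩ := per_bdd _ d₂ (fderiv_per f₂ h₂p) t
  obtain ⟨U, hU0, hU⟩ := per_bdd u cu hup t
  obtain ⟨U', hU'0, hU'⟩ := per_bdd _ (hu'.continuous_fderiv one_ne_zero) (fderiv_per u hup) t
  obtain ⟨hintS, hS⟩ := deriv_S K cK hKi f₁ f₂ h₁' h₂' x t M₁ M₂ M₁' M₂' hM₁0 hM₂0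
    hM₁ hM₂ hM₁' hM₂'
  have fx : ∀ {F : Type} [NormedAddCommGroup F] [NormedSpace ℝ F] (f : E2 × ℝ → F),
      Differentiable ℝ f → ∀ w, HasFDerivAt (fun w => f (w, t))
        ((fderiv ℝ f (w, t)).comp (ContinuousLinearMap.inl ℝ E2 ℝ)) w := by
    intro F _ _ f hf w
    exact (hf (w, t)).hasFDerivAt.comp w (hasFDerivAt_prodMk_left w t)
  have ft : ∀ (f : E2 × ℝ → ℝ), Differentiable ℝ f → ∀ w,
      HasDerivAt (fun τ => f (w, τ)) (fderiv ℝ f (w, t) (0, 1)) t := by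
    intro f hf w
    have h0 : HasFDerivAt (fun τ => f (w, τ))
        ((fderiv ℝ f (w, t)).comp (ContinuousLinearMap.inr ℝ E2 ℝ)) t :=
      (hf (w, t)).hasFDerivAt.comp t (hasFDerivAt_prodMk_right w t)
    exact h0.hasDerivAt
  have hmat : ∀ (f : E2 × ℝ → ℝ), Differentiable ℝ f → ∀ w a,
      deriv (fun τ => f (w, τ)) t + fderiv ℝ (fun w => f (w, t)) w a
        = fderiv ℝ f (w, t) (a, 1) := by
    intro f hf w a
    rw [(ft f hf w).deriv, (fx f hf w).fderiv, ContinuousLinearMap.comp_apply,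
      ContinuousLinearMap.inl_apply, ← map_add]
    simp
  have cv : ∀ (z : E2) (Φ : E4 → ℝ), ∫ y : E4, Φ (z - y.1, z - y.2) = ∫ y : E4, Φ y := by
    intro z Φ
    exact integral_sub_left_eq_self Φ (volume : Measure E4) (z, z)
  have eS : ∀ (z : E2) (τ : ℝ), ∫ y : E4, K (z - y.1, z - y.2) * f₁ (y.1, τ) * f₂ (y.2, τ)
      = ∫ y : E4, K y * (f₁ (z - y.1, τ) * f₂ (z - y.2, τ)) := by
    intro z τ
    rw [← cv z]
    simp only [sub_sub_cancel, mul_assoc]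
  have eD : deriv (fun τ => ∫ y : E4, K (x - y.1, x - y.2) * f₁ (y.1, τ) * f₂ (y.2, τ)) t
      + fderiv ℝ (fun z => ∫ y : E4, K (z - y.1, z - y.2) * f₁ (y.1, t) * f₂ (y.2, t))
                x (u (x, t))
      = ∫ z : E4, K z * (f₁ (x - z.1, t) * fderiv ℝ f₂ (x - z.2, t) (u (x, t), 1)
        + f₂ (x - z.2, t) * fderiv ℝ f₁ (x - z.1, t) (u (x, t), 1)) := by
    simp only [eS]
    have a1 := (HasFDerivAt.comp t hS
      (hasFDerivAt_prodMk_right (𝕜 := ℝ) (E := E2) (F := ℝ) x t)).hasDerivAt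
    have a2 := HasFDerivAt.comp x hS (hasFDerivAt_prodMk_left (𝕜 := ℝ) (E := E2) (F := ℝ) x t)
    simp only [Function.comp_def] at a1 a2
    rw [a1.deriv, a2.fderiv, ContinuousLinearMap.comp_apply, ContinuousLinearMap.comp_apply,
      ContinuousLinearMap.inl_apply, ContinuousLinearMap.inr_apply, ← map_add,
      ContinuousLinearMap.integral_apply hintS]
    simp [mul_add]
  have e3 : ∫ y : E4, K (x - y.1, x - y.2) *
                (deriv (fun τ => f₁ (y.1, τ)) t
                  + fderiv ℝ (fun w => f₁ (w, t)) y.1 (u (y.1, t))) * f₂ (y.2, t)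
      = ∫ z : E4, K z * (f₂ (x - z.2, t) * fderiv ℝ f₁ (x - z.1, t) (u (x - z.1, t), 1)) := by
    rw [← cv x]
    simp only [sub_sub_cancel, hmat f₁ df₁]
    congr 1; ext y; ring
  have e4 : ∫ y : E4, K (x - y.1, x - y.2) * f₁ (y.1, t) *
                (deriv (fun τ => f₂ (y.2, τ)) t
                  + fderiv ℝ (fun w => f₂ (w, t)) y.2 (u (y.2, t)))
      = ∫ z : E4, K z * (f₁ (x - z.1, t) * fderiv ℝ f₂ (x - z.2, t) (u (x - z.2, t), 1)) := by
    rw [← cv x]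
    simp only [sub_sub_cancel, hmat f₂ df₂]
    congr 1; ext y; ring
  have tt : |t - t| ≤ 1 := by simp
  have hpair : ∀ a : E2, ‖a‖ ≤ U → ‖((a, 1) : E2 × ℝ)‖ ≤ U + 1 := by
    intro a ha
    rw [Prod.norm_def]
    refine max_le ?_ ?_
    · simp only; linarith
    · simp only [norm_one]; linarith
  have bI : ∀ (Ψ : E4 → ℝ) (c : ℝ), Continuous Ψ → (∀ z, ‖Ψ z‖ ≤ c) →
      Integrable (fun z => K z * Ψ z) := fun Ψ c h1 h2 =>
    hKi.mul_bdd (c := c) h1.aestronglyMeasurable (Filter.Eventually.of_forall h2)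
  have i1 : ∀ a : E4 → E2, Continuous a → (∀ z, ‖a z‖ ≤ U) → Integrable (fun z : E4 =>
      K z * (f₂ (x - z.2, t) * fderiv ℝ f₁ (x - z.1, t) (a z, 1))) := by
    intro a ha hb
    refine bI _ (M₂ * (M₁' * (U + 1))) (by fun_prop) fun z => ?_
    rw [norm_mul]
    exact mul_le_mul (hM₂ _ _ tt) (ContinuousLinearMap.le_of_opNorm_le_of_le _ (hM₁' _ _ tt)
      (hpair _ (hb z))) (norm_nonneg _) hM₂0
  have i2 : ∀ a : E4 → E2, Continuous a → (∀ z, ‖a z‖ ≤ U) → Integrable (fun z : E4 =>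
      K z * (f₁ (x - z.1, t) * fderiv ℝ f₂ (x - z.2, t) (a z, 1))) := by
    intro a ha hb
    refine bI _ (M₁ * (M₂' * (U + 1))) (by fun_prop) fun z => ?_
    rw [norm_mul]
    exact mul_le_mul (hM₁ _ _ tt) (ContinuousLinearMap.le_of_opNorm_le_of_le _ (hM₂' _ _ tt)
      (hpair _ (hb z))) (norm_nonneg _) hM₁0
  have j1 := i1 (fun _ => u (x, t)) continuous_const (fun _ => hU _ _ tt)
  have j2 := i2 (fun _ => u (x, t)) continuous_const (fun _ => hU _ _ tt)
  have j3 := i1 (fun z => u (x - z.1, t)) (by fun_prop) (fun _ => hU _ _ tt)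
  have j4 := i2 (fun z => u (x - z.2, t)) (by fun_prop) (fun _ => hU _ _ tt)
  set v : E2 → E2 := fun w => u (x, t) - u (x - w, t) with hv
  set g₁ : E2 → ℝ := fun w => f₁ (x - w, t) with hg₁
  set g₂ : E2 → ℝ := fun w => f₂ (x - w, t) with hg₂
  have gx : ∀ {F : Type} [NormedAddCommGroup F] [NormedSpace ℝ F] (f : E2 × ℝ → F),
      Differentiable ℝ f → ∀ w, HasFDerivAt (fun w => f (x - w, t))
        (-((fderiv ℝ f (x - w, t)).comp (ContinuousLinearMap.inl ℝ E2 ℝ))) w := by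
    intro F _ _ f hf w
    have h1 := (fx f hf (x - w)).comp w ((hasFDerivAt_id w).const_sub x)
    refine h1.congr_fderiv ?_
    ext e; simp
  have gd : ∀ (f : E2 × ℝ → ℝ), Differentiable ℝ f → ∀ w e,
      fderiv ℝ (fun w => f (x - w, t)) w e = - fderiv ℝ f (x - w, t) (e, 0) := by
    intro f hf w e
    rw [(gx f hf w).fderiv]; simp
  have gn : ∀ (f : E2 × ℝ → ℝ), Differentiable ℝ f → ∀ B : ℝ, 0 ≤ B →
      (∀ w τ, |τ - t| ≤ 1 → ‖fderiv ℝ f (w, τ)‖ ≤ B) →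
      ∀ w, ‖fderiv ℝ (fun w => f (x - w, t)) w‖ ≤ B := by
    intro f hf B hB h w
    refine ContinuousLinearMap.opNorm_le_bound _ hB fun e => ?_
    rw [gd f hf, norm_neg]
    refine ContinuousLinearMap.le_of_opNorm_le_of_le _ (h _ _ tt) ?_
    simp [Prod.norm_def]
  have s1 : ∀ w, ‖g₁ w‖ ≤ ⨆ z : E2, |f₁ (z, t)| := fun w =>
    le_ciSup (f := fun z : E2 => |f₁ (z, t)|) ⟨M₁, by rintro _ ⟨z, rfl⟩; exact hM₁ z t tt⟩ (x - w)
  have s2 : ∀ w, ‖g₂ w‖ ≤ ⨆ z : E2, |f₂ (z, t)| := fun w =>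
    le_ciSup (f := fun z : E2 => |f₂ (z, t)|) ⟨M₂, by rintro _ ⟨z, rfl⟩; exact hM₂ z t tt⟩ (x - w)
  have hvd : ∀ w, fderiv ℝ v w = fderiv ℝ (fun w => u (w, t)) (x - w) := by
    intro w
    rw [((gx u du w).const_sub (u (x, t))).fderiv, (fx u du (x - w)).fderiv, neg_neg]
  have s3 : ∀ w, ‖fderiv ℝ v w‖ ≤ ⨆ z : E2, ‖fderiv ℝ (fun w => u (w, t)) z‖ := by
    intro w
    rw [hvd]
    refine le_ciSup (f := fun z : E2 => ‖fderiv ℝ (fun w => u (w, t)) z‖) ⟨U', ?_⟩ (x - w)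
    rintro _ ⟨z, rfl⟩
    refine ContinuousLinearMap.opNorm_le_bound _ hU'0 fun e => ?_
    rw [(fx u du z).fderiv, ContinuousLinearMap.comp_apply]
    refine ContinuousLinearMap.le_of_opNorm_le_of_le _ (hU' _ _ tt) ?_
    simp [Prod.norm_def]
  have proj : ∀ (h : E2 → E2) (w : E2) (j : Fin 2) (e : E2), DifferentiableAt ℝ h w →
      fderiv ℝ (fun y => h y j) w e = (fderiv ℝ h w e) j := by
    intro h w j e hh
    have h2 : HasFDerivAt (fun w => h w j)
      ((EuclideanSpace.proj (𝕜 := ℝ) j : E2 →L[ℝ] ℝ).comp (fderiv ℝ h w)) w :=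
      ((EuclideanSpace.proj (𝕜 := ℝ) j : E2 →L[ℝ] ℝ).hasFDerivAt).comp w hh.hasFDerivAt
    rw [h2.fderiv]; rfl
  have cv1 : ContDiff ℝ 1 v := by fun_prop
  have main := static_bound C₀ K hK hKi (fun κ => (hdK κ).1) hzK g₁ g₂ (by fun_prop) (by fun_prop)
    (⨆ z : E2, |f₁ (z, t)|) (⨆ z : E2, |f₂ (z, t)|) M₁' M₂'
    ((norm_nonneg _).trans (s1 0)) ((norm_nonneg _).trans (s2 0)) s1 s2
    (gn f₁ df₁ _ hM₁'0 hM₁') (gn f₂ df₂ _ hM₂'0 hM₂') v cv1 (by simp [hv])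
    (⨆ z : E2, ‖fderiv ℝ (fun w => u (w, t)) z‖) (U + U) s3
    (fun w => (norm_sub_le _ _).trans (add_le_add (hU _ _ tt) (hU _ _ tt)))
    (by
      intro w
      rw [← hudiv (x - w) t]
      refine Finset.sum_congr rfl fun j _ => ?_
      rw [proj v w j _ (cv1.differentiable one_ne_zero w), hvd,
        proj (fun y => u (y, t)) (x - w) j _ (fx u du _).differentiableAt])
  have eq : ∫ z : E4, K z * (fderiv ℝ g₁ z.1 (v z.1) * g₂ z.2 + g₁ z.1 * fderiv ℝ g₂ z.2 (v z.2))
      = -((∫ z : E4, K z * (f₁ (x - z.1, t) * fderiv ℝ f₂ (x - z.2, t) (u (x, t), 1)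
        + f₂ (x - z.2, t) * fderiv ℝ f₁ (x - z.1, t) (u (x, t), 1)))
        - (∫ z : E4, K z * (f₂ (x - z.2, t) * fderiv ℝ f₁ (x - z.1, t) (u (x - z.1, t), 1)))
        - ∫ z : E4, K z * (f₁ (x - z.1, t) * fderiv ℝ f₂ (x - z.2, t) (u (x - z.2, t), 1))) := by
    have e0 : ∫ z : E4, K z * (f₁ (x - z.1, t) * fderiv ℝ f₂ (x - z.2, t) (u (x, t), 1)
        + f₂ (x - z.2, t) * fderiv ℝ f₁ (x - z.1, t) (u (x, t), 1))
        = (∫ z : E4, K z * (f₁ (x - z.1, t) * fderiv ℝ f₂ (x - z.2, t) (u (x, t), 1)))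
        + ∫ z : E4, K z * (f₂ (x - z.2, t) * fderiv ℝ f₁ (x - z.1, t) (u (x, t), 1)) := by
      rw [← integral_add j2 j1]; simp only [mul_add]
    have e5 : ∀ z : E4,
        K z * (fderiv ℝ g₁ z.1 (v z.1) * g₂ z.2 + g₁ z.1 * fderiv ℝ g₂ z.2 (v z.2))
        = (K z * (f₂ (x - z.2, t) * fderiv ℝ f₁ (x - z.1, t) (u (x - z.1, t), 1))
          - K z * (f₂ (x - z.2, t) * fderiv ℝ f₁ (x - z.1, t) (u (x, t), 1)))
          + (K z * (f₁ (x - z.1, t) * fderiv ℝ f₂ (x - z.2, t) (u (x - z.2, t), 1))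
          - K z * (f₁ (x - z.1, t) * fderiv ℝ f₂ (x - z.2, t) (u (x, t), 1))) := by
      intro z
      have b : ∀ a : E2, ((u (x, t) - a, 0) : E2 × ℝ) = (u (x, t), 1) - (a, 1) := fun a => by
        simp
      rw [hg₁, hg₂, gd f₁ df₁, gd f₂ df₂]
      simp only [hv]
      rw [b, b, map_sub, map_sub]
      ring
    rw [e0]
    simp only [e5]
    have j31 := j3.sub j1
    have j42 := j4.sub j2
    simp only [Pi.sub_def] at j31 j42
    rw [integral_add j31 j42, integral_sub j3 j1, integral_sub j4 j2]
    ring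
  rw [eD, e3, e4]
  rw [eq, abs_neg] at main
  refine main.trans (le_of_eq ?_)
  ring
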